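/- Let ρ be a density operator and σ a positive definite density operator on a finite-dimensional complex Hilbert space, and let α > 1. Then the Petz–Rényi divergence D_α(ρ‖σ) := (1/(α−1)) log Tr[ρ^α σ^{1−α}] admits the variational expression D_α(ρ‖σ) = sup over operators T with 0 < T ≤ 𝟙 of { (α/(α−1)) log Tr[(T^{α/2} ρ^α T^{α/2})^{1/α}] − log Tr[(T^{α/2} σ^{α−1} T^{α/2})^{1/(α−1)}] }. -/

import Mathlib

open Matrix
open scoped ComplexOrder Kronecker

noncomputable section

/-- Real power of a Hermitian matrix via functional calculus on its support
(Moore–Penrose convention, also for negative powers); junk value `0` for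
non-Hermitian input. -/
def Matrix.rpowH {ι : Type*} [Fintype ι] [DecidableEq ι] (A : Matrix ι ι ℂ) (p : ℝ) :
    Matrix ι ι ℂ :=
  if hA : A.IsHermitian then
    (hA.eigenvectorUnitary : Matrix ι ι ℂ) *
      Matrix.diagonal (fun i => ((hA.eigenvalues i ^ p : ℝ) : ℂ)) *
      star (hA.eigenvectorUnitary : Matrix ι ι ℂ)
  else 0

/-- The operator absolute value `|A| = (A† A)^(1/2)`. -/
def Matrix.absM {ι : Type*} [Fintype ι] [DecidableEq ι] (A : Matrix ι ι ℂ) :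
    Matrix ι ι ℂ :=
  Matrix.rpowH (Aᴴ * A) (2⁻¹ : ℝ)

/-- Real part of the trace. -/
def retr {ι : Type*} [Fintype ι] (A : Matrix ι ι ℂ) : ℝ :=
  (Matrix.trace A).re

/-!
Everything rests on the trace Hölder inequality
`Tr C^{1/α} ≤ (Tr A^{1/(α-1)})^{1-1/α} (Tr C A⁻¹)^{1/α}` for `C ≥ 0` and `A > 0`: expanding all
three traces over pairs of eigenvectors of `C` and `A`, it becomes the scalar weighted Hölder
inequality. Put `R = ρ^α`, `S = σ^{α-1}` and `Y = T^{α/2}`. For `C = Y R Y` and `A = Y S Y` the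
factor `Tr C A⁻¹ = Tr R S⁻¹` no longer depends on `Y`, and the logarithm of the inequality is the
upper bound.

The functional is invariant under `Y ↦ k Y` for `k > 0`, so the constraint `T ≤ 1` is harmless and
`Y` may be any positive definite matrix. With `B = S^{-1/2} R S^{-1/2}`, the choice
`Y² = S^{-1/2} (B + ε)^{α-1} S^{-1/2}` gives `Y S Y` and `Y R Y` the spectra of `(B + ε)^{α-1}` and
`B (B + ε)^{α-1}`, so the bound is attained as `ε → 0`; the shift by `ε` keeps `Y` invertible when
`ρ` is singular.
-/

namespace PetzRenyi

section General

lemma eq_biSup_of_isLUB_image {X : Type*} {p : X → Prop} {f : X → ℝ} {b : ℝ}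
    (h : IsLUB (f '' {x | p x}) b) (hb : 0 ≤ b) : b = ⨆ (x) (_ : p x), f x := by
  have hrange : f '' {x | p x} = Set.range fun x : Subtype p => f x :=
    Set.image_eq_range f {x | p x}
  rw [hrange] at h
  have : Nonempty (Subtype p) := Set.range_nonempty_iff_nonempty.mp h.nonempty
  -- Where `p x` fails the inner supremum is `sSup ∅ = 0`, which must not exceed `b`.
  have hempty : sSup ∅ ≤ ⨆ x : Subtype p, f x := by rwa [Real.sSup_empty, h.ciSup_eq]
  exact h.ciSup_eq.symm.trans (ciSup_subtype h.bddAbove hempty)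

lemma le_rpow_mul_add_rpow {x ε α : ℝ} (hx : 0 ≤ x) (hε : 0 ≤ ε) (hα : 1 < α) :
    x ≤ (x * (x + ε) ^ (α - 1)) ^ α⁻¹ := by
  have hα0 : 0 < α := by linarith
  rw [Real.le_rpow_inv_iff_of_pos hx (by positivity) hα0]
  calc x ^ α = x * x ^ (α - 1) := by
        rw [← Real.rpow_one_add' hx (by linarith), add_sub_cancel]
    _ ≤ x * (x + ε) ^ (α - 1) := by gcongr; all_goals linarith

lemma sum_mul_rpow_inv_le {X : Type*} (s : Finset X) {w c a : X → ℝ} (hw : ∀ x, 0 ≤ w x)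
    (hc : ∀ x, 0 ≤ c x) (ha : ∀ x, 0 < a x) {α : ℝ} (hα : 1 < α) :
    ∑ x ∈ s, w x * c x ^ α⁻¹ ≤
      (∑ x ∈ s, w x * a x ^ (α - 1)⁻¹) ^ (1 - α⁻¹) * (∑ x ∈ s, w x * (c x * (a x)⁻¹)) ^ α⁻¹ := by
  have hα0 : 0 < α := by linarith
  have hα1 : 0 < α - 1 := by linarith
  have har (x : X) (r : ℝ) : 0 < a x ^ r := Real.rpow_pos_of_pos (ha x) r
  have hcr (x : X) : 0 ≤ c x ^ α⁻¹ := Real.rpow_nonneg (hc x) _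
  have hexp : (α - 1)⁻¹ + -(α - 1)⁻¹ * α = -1 := by field_simp; ring
  have hholder := Real.inner_le_weight_mul_Lp_of_nonneg s hα.le
    (fun x => w x * a x ^ (α - 1)⁻¹) (fun x => c x ^ α⁻¹ * a x ^ (-(α - 1)⁻¹))
    (fun x => mul_nonneg (hw x) (har x _).le) (fun x => mul_nonneg (hcr x) (har x _).le)
  have hlhs (x : X) : w x * a x ^ (α - 1)⁻¹ * (c x ^ α⁻¹ * a x ^ (-(α - 1)⁻¹)) =
      w x * c x ^ α⁻¹ := by
    rw [mul_assoc, mul_left_comm (a x ^ _), ← Real.rpow_add (ha x), add_neg_cancel,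
      Real.rpow_zero, mul_one]
  have hrhs (x : X) : w x * a x ^ (α - 1)⁻¹ * (c x ^ α⁻¹ * a x ^ (-(α - 1)⁻¹)) ^ α =
      w x * (c x * (a x)⁻¹) := by
    rw [Real.mul_rpow (hcr x) (har x _).le, Real.rpow_inv_rpow (hc x) hα0.ne',
      ← Real.rpow_mul (ha x).le, mul_assoc, mul_left_comm (a x ^ _), ← Real.rpow_add (ha x), hexp,
      Real.rpow_neg_one]
  simpa only [hlhs, hrhs] using hholder

variable {ι K : Type*} [Fintype ι] [DecidableEq ι] [CommRing K]

lemma charpoly_conj_of_mul_self_eq {Y Q A : Matrix ι ι K} (h : Y * Y = Q * A * Q)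
    (X : Matrix ι ι K) : (Y * X * Y).charpoly = (Q * X * Q * A).charpoly := by
  calc (Y * X * Y).charpoly = (Y * Y * X).charpoly := by
        rw [Matrix.charpoly_mul_comm, Matrix.mul_assoc]
    _ = (Q * (A * Q * X)).charpoly := by rw [h]; simp only [Matrix.mul_assoc]
    _ = (A * (Q * X * Q)).charpoly := by
        rw [Matrix.charpoly_mul_comm]; simp only [Matrix.mul_assoc]
    _ = (Q * X * Q * A).charpoly := Matrix.charpoly_mul_comm _ _

lemma posDef_ne_zero_of_ne_zero {X : Type*} {R S : Matrix X X ℂ} (hS : S.PosDef) (hR0 : R ≠ 0) :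
    S ≠ 0 := by
  obtain ⟨i, -⟩ := Function.ne_iff.mp hR0
  rintro rfl
  exact lt_irrefl _ (hS.diag_pos (i := i))

end General

section Trace

variable {ι : Type*} [Fintype ι] {A R S Y : Matrix ι ι ℂ}

lemma retr_mul_comm (A B : Matrix ι ι ℂ) : retr (A * B) = retr (B * A) := by
  rw [retr, retr, Matrix.trace_mul_comm]

lemma retr_smul (k : ℝ) (A : Matrix ι ι ℂ) : retr (k • A) = k * retr A := by
  simp [retr, Matrix.trace_smul]

lemma retr_pos (hA : A.PosSemidef) (hA0 : A ≠ 0) : 0 < retr A := by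
  have htr : 0 < A.trace := hA.trace_nonneg.lt_of_ne' (hA.trace_eq_zero_iff.not.mpr hA0)
  exact (Complex.pos_iff.mp htr).1

lemma conj_posSemidef (hR : R.PosSemidef) (hY : Y.IsHermitian) : (Y * R * Y).PosSemidef := by
  simpa only [hY.eq] using hR.mul_mul_conjTranspose_same Y

lemma conj_posDef (hS : S.PosDef) (hY : Y.PosDef) : (Y * S * Y).PosDef := by
  classical
  have h := (Matrix.IsUnit.posDef_star_right_conjugate_iff (x := S) hY.isUnit).mpr hS
  rwa [Matrix.star_eq_conjTranspose, hY.1.eq] at h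

end Trace

variable {ι : Type*} [Fintype ι] [DecidableEq ι] {A B C Q R S Y : Matrix ι ι ℂ}

section Powers

open scoped MatrixOrder

lemma rpowH_eq_cfc (A : Matrix ι ι ℂ) (p : ℝ) : A.rpowH p = cfc (fun x : ℝ => x ^ p) A := by
  by_cases hA : A.IsHermitian
  · rw [Matrix.rpowH, dif_pos hA, hA.cfc_eq]
    rfl
  · rw [Matrix.rpowH, dif_neg hA]
    exact (cfc_apply_of_not_predicate (p := IsSelfAdjoint) A hA).symm

lemma continuousOn_spectrum (A : Matrix ι ι ℂ) (f : ℝ → ℝ) : ContinuousOn f (spectrum ℝ A) :=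
  A.finite_real_spectrum.continuousOn f

lemma spectrum_nonneg (hA : A.PosSemidef) {x : ℝ} (hx : x ∈ spectrum ℝ A) : 0 ≤ x :=
  spectrum_nonneg_of_nonneg hA.nonneg hx

lemma spectrum_pos (hA : A.PosDef) {x : ℝ} (hx : x ∈ spectrum ℝ A) : 0 < x :=
  hA.isStrictlyPositive.spectrum_pos hx

lemma cfc_posDef (hA : A.IsHermitian) {f : ℝ → ℝ} (hf : ∀ x ∈ spectrum ℝ A, 0 < f x) :
    (cfc f A).PosDef := by
  have hpsd : (cfc f A).PosSemidef := (cfc_nonneg fun x hx => (hf x hx).le).posSemidef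
  have hunit : IsUnit (cfc f A) :=
    (isUnit_cfc_iff f A (continuousOn_spectrum A f) hA).mpr fun x hx => (hf x hx).ne'
  exact hpsd.posDef_iff_isUnit.mpr hunit

lemma rpowH_posSemidef (hA : A.PosSemidef) (p : ℝ) : (A.rpowH p).PosSemidef := by
  rw [rpowH_eq_cfc]
  exact (cfc_nonneg fun x hx => Real.rpow_nonneg (spectrum_nonneg hA hx) p).posSemidef

lemma rpowH_posDef (hA : A.PosDef) (p : ℝ) : (A.rpowH p).PosDef := by
  rw [rpowH_eq_cfc]
  exact cfc_posDef hA.1 fun x hx => Real.rpow_pos_of_pos (spectrum_pos hA hx) p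

lemma rpowH_cfc (hA : A.IsHermitian) (f : ℝ → ℝ) (p : ℝ) :
    (cfc f A).rpowH p = cfc (fun x => f x ^ p) A := by
  rw [rpowH_eq_cfc]
  exact (cfc_comp _ f A hA ((A.finite_real_spectrum.image f).continuousOn _)
    (continuousOn_spectrum A f)).symm

lemma mul_cfc_eq_cfc (hA : A.IsHermitian) (f : ℝ → ℝ) :
    A * cfc f A = cfc (fun x => x * f x) A := by
  have hid : cfc (fun x : ℝ => x) A = A := cfc_id' ℝ A hA
  rw [cfc_mul _ f A (continuousOn_spectrum A _) (continuousOn_spectrum A f), hid]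

lemma rpowH_zero (hA : A.IsHermitian) : A.rpowH 0 = 1 := by
  simp only [rpowH_eq_cfc, Real.rpow_zero]
  exact cfc_const_one ℝ A hA

lemma rpowH_one (hA : A.IsHermitian) : A.rpowH 1 = A := by
  simp only [rpowH_eq_cfc, Real.rpow_one]
  exact cfc_id' ℝ A hA

lemma rpowH_rpowH (hA : A.PosSemidef) (p q : ℝ) : (A.rpowH p).rpowH q = A.rpowH (p * q) := by
  rw [rpowH_eq_cfc A p, rpowH_cfc hA.1, rpowH_eq_cfc]
  exact cfc_congr fun x hx => (Real.rpow_mul (spectrum_nonneg hA hx) p q).symm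

lemma rpowH_rpowH_inv (hA : A.PosSemidef) {p : ℝ} (hp : p ≠ 0) :
    (A.rpowH p).rpowH p⁻¹ = A := by
  rw [rpowH_rpowH hA, mul_inv_cancel₀ hp, rpowH_one hA.1]

lemma rpowH_add (hA : A.PosDef) (p q : ℝ) : A.rpowH (p + q) = A.rpowH p * A.rpowH q := by
  simp only [rpowH_eq_cfc]
  rw [← cfc_mul _ _ A (continuousOn_spectrum A _) (continuousOn_spectrum A _)]
  exact cfc_congr fun x hx => Real.rpow_add (spectrum_pos hA hx) p q

lemma rpowH_neg (hA : A.PosDef) (p : ℝ) : A.rpowH (-p) = (A.rpowH p)⁻¹ := by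
  refine (Matrix.inv_eq_right_inv ?_).symm
  rw [← rpowH_add hA, add_neg_cancel, rpowH_zero hA.1]

lemma rpowH_half_mul_self (hA : A.PosDef) : A.rpowH 2⁻¹ * A.rpowH 2⁻¹ = A := by
  rw [← rpowH_add hA, show (2⁻¹ + 2⁻¹ : ℝ) = 1 by norm_num, rpowH_one hA.1]

lemma rpowH_smul (hA : A.PosSemidef) {k : ℝ} (hk : 0 ≤ k) (p : ℝ) :
    (k • A).rpowH p = k ^ p • A.rpowH p := by
  have hcomp : cfc (fun x : ℝ => (k * x) ^ p) A = cfc (fun x : ℝ => x ^ p) (k • A) :=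
    cfc_comp_smul k (fun x : ℝ => x ^ p) A ((A.finite_real_spectrum.image _).continuousOn _) hA.1
  rw [rpowH_eq_cfc, rpowH_eq_cfc, ← hcomp, ← cfc_smul _ _ A (continuousOn_spectrum A _)]
  exact cfc_congr fun x hx => Real.mul_rpow hk (spectrum_nonneg hA hx)

lemma exists_rpowH_eq_smul (hA : A.PosDef) {p : ℝ} (hp : 0 < p) :
    ∃ T : Matrix ι ι ℂ, ∃ k : ℝ, 0 < k ∧ (T.PosDef ∧ (1 - T).PosSemidef) ∧
      T.rpowH p = k • A := by
  obtain ⟨b, hb⟩ := A.finite_real_spectrum.bddAbove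
  let k := (max b 1)⁻¹
  have hk : 0 < k := by positivity
  have hkA : (k • A).PosDef := hA.smul hk
  have hle : (k • A).rpowH p⁻¹ ≤ 1 := by
    rw [rpowH_smul hA.posSemidef hk.le, rpowH_eq_cfc, ← cfc_smul _ _ A (continuousOn_spectrum A _)]
    refine cfc_le_one _ _ fun x hx => ?_
    have hx0 := spectrum_pos hA hx
    rw [smul_eq_mul, ← Real.mul_rpow hk.le hx0.le]
    refine Real.rpow_le_one (by positivity) ?_ (by positivity)
    exact inv_mul_le_one_of_le₀ ((hb hx).trans (le_max_left b 1)) (by positivity)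
  refine ⟨(k • A).rpowH p⁻¹, k, hk, ⟨rpowH_posDef hkA _, Matrix.le_iff.mp hle⟩, ?_⟩
  rw [rpowH_rpowH hkA.posSemidef, inv_mul_cancel₀ hp.ne', rpowH_one hkA.1]

end Powers

section SpectralTrace

lemma retr_cfc (hA : A.IsHermitian) (f : ℝ → ℝ) :
    retr (cfc f A) = ∑ i, f (hA.eigenvalues i) := by
  rw [retr, hA.cfc_eq, Matrix.IsHermitian.cfc, Unitary.conjStarAlgAut_apply,
    Matrix.trace_mul_cycle]
  simp [Matrix.trace_diagonal]

lemma retr_rpowH_congr_charpoly (hA : A.IsHermitian) (hB : B.IsHermitian)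
    (h : A.charpoly = B.charpoly) (p : ℝ) : retr (A.rpowH p) = retr (B.rpowH p) := by
  rw [rpowH_eq_cfc, rpowH_eq_cfc, retr_cfc hA, retr_cfc hB,
    (hA.eigenvalues_eq_eigenvalues_iff hB).mpr h]

lemma retr_rpowH_pos (hA : A.PosSemidef) (hA0 : A ≠ 0) (p : ℝ) : 0 < retr (A.rpowH p) := by
  rw [rpowH_eq_cfc, retr_cfc hA.1]
  obtain ⟨i, hi⟩ := Function.ne_iff.mp (hA.1.eigenvalues_eq_zero_iff.not.mpr hA0)
  exact Finset.sum_pos' (fun j _ => Real.rpow_nonneg (hA.eigenvalues_nonneg j) p)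
    ⟨i, Finset.mem_univ i, Real.rpow_pos_of_pos ((hA.eigenvalues_nonneg i).lt_of_ne' hi) p⟩

lemma rpowH_ne_zero (hA : A.PosSemidef) (hA0 : A ≠ 0) (p : ℝ) : A.rpowH p ≠ 0 := by
  intro h
  simpa [h, retr] using retr_rpowH_pos hA hA0 p

lemma retr_mul_inv_eq_retr_conj (h : Q * Q = S⁻¹) : retr (R * S⁻¹) = retr (Q * R * Q) := by
  rw [← h, ← Matrix.mul_assoc, retr_mul_comm, Matrix.mul_assoc]

lemma retr_conj_mul_inv_conj (hY : IsUnit Y) (R S : Matrix ι ι ℂ) :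
    retr (Y * R * Y * (Y * S * Y)⁻¹) = retr (R * S⁻¹) := by
  have hdet : IsUnit Y.det := (Matrix.isUnit_iff_isUnit_det Y).mp hY
  calc retr (Y * R * Y * (Y * S * Y)⁻¹) = retr (Y * R * (Y * Y⁻¹) * S⁻¹ * Y⁻¹) := by
        simp only [Matrix.mul_inv_rev, Matrix.mul_assoc]
    _ = retr (Y⁻¹ * Y * R * S⁻¹) := by
        rw [Matrix.mul_nonsing_inv Y hdet, retr_mul_comm]
        simp only [Matrix.mul_assoc, Matrix.one_mul]
    _ = retr (R * S⁻¹) := by rw [Matrix.nonsing_inv_mul Y hdet, Matrix.one_mul]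

end SpectralTrace

section InverseSqrt

lemma conj_ne_zero (hR : R ≠ 0) (hY : IsUnit Y) : Y * R * Y ≠ 0 := by
  rwa [ne_eq, hY.mul_left_eq_zero, hY.mul_right_eq_zero]

lemma rpowH_neg_half_mul_self (hS : S.PosDef) : S.rpowH (-2⁻¹) * S.rpowH (-2⁻¹) = S⁻¹ := by
  rw [rpowH_neg hS, ← Matrix.mul_inv_rev, rpowH_half_mul_self hS]

lemma rpowH_neg_half_conj_self (hS : S.PosDef) : S.rpowH (-2⁻¹) * S * S.rpowH (-2⁻¹) = 1 := by
  calc S.rpowH (-2⁻¹) * S * S.rpowH (-2⁻¹)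
      = S.rpowH (-2⁻¹) * S.rpowH 1 * S.rpowH (-2⁻¹) := by rw [rpowH_one hS.1]
    _ = S.rpowH 0 := by rw [← rpowH_add hS, ← rpowH_add hS]; norm_num
    _ = 1 := rpowH_zero hS.1

lemma retr_mul_inv_pos (hR : R.PosSemidef) (hR0 : R ≠ 0) (hS : S.PosDef) :
    0 < retr (R * S⁻¹) := by
  have hQ := rpowH_posDef hS (-2⁻¹)
  rw [retr_mul_inv_eq_retr_conj (rpowH_neg_half_mul_self hS)]
  exact retr_pos (conj_posSemidef hR hQ.1) (conj_ne_zero hR0 hQ.isUnit)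

end InverseSqrt

section Holder

/-- The squared moduli `|⟨vᵢ, wⱼ⟩|²` of the inner products between the eigenbases of two Hermitian
matrices. They are the weights which turn traces of products of functions of the two matrices into
sums over pairs of eigenvalues. -/
def eigenbasisOverlap (hA : A.IsHermitian) (hB : B.IsHermitian) (x : ι × ι) : ℝ :=
  Complex.normSq
    ((star (hA.eigenvectorUnitary : Matrix ι ι ℂ) * hB.eigenvectorUnitary) x.1 x.2)

lemma eigenbasisOverlap_nonneg (hA : A.IsHermitian) (hB : B.IsHermitian) (x : ι × ι) :
    0 ≤ eigenbasisOverlap hA hB x :=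
  Complex.normSq_nonneg _

lemma retr_diagonal_mul_mul_diagonal_mul_star (M : Matrix ι ι ℂ) (a b : ι → ℝ) :
    retr (diagonal (fun i => (a i : ℂ)) * M * diagonal (fun j => (b j : ℂ)) * star M) =
      ∑ x : ι × ι, Complex.normSq (M x.1 x.2) * (a x.1 * b x.2) := by
  rw [retr, Matrix.trace, Complex.re_sum, Fintype.sum_prod_type]
  refine Finset.sum_congr rfl fun i _ => ?_
  rw [Matrix.diag_apply, Matrix.mul_apply, Complex.re_sum]
  refine Finset.sum_congr rfl fun j _ => ?_
  have hentry : (a i : ℂ) * M i j * b j * star (M i j) =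
      ((Complex.normSq (M i j) * (a i * b j) : ℝ) : ℂ) := by
    push_cast
    rw [Complex.normSq_eq_conj_mul_self, Complex.star_def]
    ring
  rw [Matrix.mul_diagonal, Matrix.diagonal_mul, Matrix.star_apply, hentry, Complex.ofReal_re]

lemma retr_cfc_mul_cfc (hA : A.IsHermitian) (hB : B.IsHermitian) (f g : ℝ → ℝ) :
    retr (cfc f A * cfc g B) = ∑ x : ι × ι,
      eigenbasisOverlap hA hB x * (f (hA.eigenvalues x.1) * g (hB.eigenvalues x.2)) := by
  simp only [eigenbasisOverlap]
  rw [← retr_diagonal_mul_mul_diagonal_mul_star _ (fun i => f (hA.eigenvalues i))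
      (fun j => g (hB.eigenvalues j)), hA.cfc_eq, hB.cfc_eq,
    Matrix.IsHermitian.cfc, Matrix.IsHermitian.cfc, Unitary.conjStarAlgAut_apply,
    Unitary.conjStarAlgAut_apply, star_mul, star_star, Matrix.mul_assoc, Matrix.mul_assoc,
    retr_mul_comm]
  simp only [Matrix.mul_assoc]
  rfl

lemma retr_rpowH_eq_sum_left (hA : A.IsHermitian) (hB : B.IsHermitian) (p : ℝ) :
    retr (A.rpowH p) = ∑ x : ι × ι, eigenbasisOverlap hA hB x * hA.eigenvalues x.1 ^ p := by
  have hone : cfc (fun _ : ℝ => (1 : ℝ)) B = 1 := cfc_const_one ℝ B hB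
  simpa only [hone, Matrix.mul_one, mul_one, ← rpowH_eq_cfc] using
    retr_cfc_mul_cfc hA hB (fun x => x ^ p) (fun _ => 1)

lemma retr_rpowH_eq_sum_right (hA : A.IsHermitian) (hB : B.IsHermitian) (p : ℝ) :
    retr (B.rpowH p) = ∑ x : ι × ι, eigenbasisOverlap hA hB x * hB.eigenvalues x.2 ^ p := by
  have hone : cfc (fun _ : ℝ => (1 : ℝ)) A = 1 := cfc_const_one ℝ A hA
  simpa only [hone, Matrix.one_mul, one_mul, ← rpowH_eq_cfc] using
    retr_cfc_mul_cfc hA hB (fun _ => 1) (fun x => x ^ p)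

lemma retr_mul_inv_eq_sum (hA : A.IsHermitian) (hB : B.PosDef) :
    retr (A * B⁻¹) = ∑ x : ι × ι,
      eigenbasisOverlap hA hB.1 x * (hA.eigenvalues x.1 * (hB.1.eigenvalues x.2)⁻¹) := by
  have hinv : B⁻¹ = cfc (fun x : ℝ => x⁻¹) B := by
    simpa only [rpowH_one hB.1, rpowH_eq_cfc, Real.rpow_neg_one] using (rpowH_neg hB 1).symm
  have hid : cfc (fun x : ℝ => x) A = A := cfc_id' ℝ A hA
  simpa only [← hinv, hid] using
    retr_cfc_mul_cfc hA hB.1 (fun x => x) (fun x => x⁻¹)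

lemma retr_rpowH_inv_le (hC : C.PosSemidef) (hA : A.PosDef) {α : ℝ} (hα : 1 < α) :
    retr (C.rpowH α⁻¹) ≤
      retr (A.rpowH (α - 1)⁻¹) ^ (1 - α⁻¹) * retr (C * A⁻¹) ^ α⁻¹ := by
  rw [retr_rpowH_eq_sum_left hC.1 hA.1, retr_rpowH_eq_sum_right hC.1 hA.1,
    retr_mul_inv_eq_sum hC.1 hA]
  exact sum_mul_rpow_inv_le Finset.univ (eigenbasisOverlap_nonneg hC.1 hA.1)
    (fun x => hC.eigenvalues_nonneg x.1) (fun x => hA.eigenvalues_pos x.2) hα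

end Holder

section NearOptimizer

variable {α ε : ℝ}

lemma retr_eq_sum_eigenvalues (hA : A.IsHermitian) : retr A = ∑ i, hA.eigenvalues i := by
  simp [retr, hA.trace_eq_sum_eigenvalues]

lemma retr_rpowH_cfc_add_rpow (hB : B.PosSemidef) (hα : 1 < α) (hε : 0 ≤ ε) :
    retr ((cfc (fun x : ℝ => (x + ε) ^ (α - 1)) B).rpowH (α - 1)⁻¹) =
      retr B + Fintype.card ι * ε := by
  have hbase (i : ι) : 0 ≤ hB.1.eigenvalues i + ε := add_nonneg (hB.eigenvalues_nonneg i) hε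
  rw [rpowH_cfc hB.1, retr_cfc hB.1, retr_eq_sum_eigenvalues hB.1]
  simp only [Real.rpow_rpow_inv (hbase _) (sub_pos.mpr hα).ne', Finset.sum_add_distrib,
    Finset.sum_const, Finset.card_univ, nsmul_eq_mul]

lemma retr_le_retr_rpowH_mul_cfc (hB : B.PosSemidef) (hα : 1 < α) (hε : 0 ≤ ε) :
    retr B ≤ retr ((B * cfc (fun x : ℝ => (x + ε) ^ (α - 1)) B).rpowH α⁻¹) := by
  rw [mul_cfc_eq_cfc hB.1, rpowH_cfc hB.1, retr_cfc hB.1, retr_eq_sum_eigenvalues hB.1]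
  exact Finset.sum_le_sum fun i _ => le_rpow_mul_add_rpow (hB.eigenvalues_nonneg i) hε hα

lemma exists_posDef_retr_bounds (hα : 1 < α) (hε : 0 < ε) (hR : R.PosSemidef) (hS : S.PosDef) :
    ∃ Y : Matrix ι ι ℂ, Y.PosDef ∧
      retr (R * S⁻¹) ≤ retr ((Y * R * Y).rpowH α⁻¹) ∧
      retr ((Y * S * Y).rpowH (α - 1)⁻¹) = retr (R * S⁻¹) + Fintype.card ι * ε := by
  let Q := S.rpowH (-2⁻¹)
  let B := Q * R * Q
  let A := cfc (fun x : ℝ => (x + ε) ^ (α - 1)) B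
  let Y := (Q * A * Q).rpowH 2⁻¹
  have hQ : Q.PosDef := rpowH_posDef hS _
  have hB : B.PosSemidef := conj_posSemidef hR hQ.1
  have hA : A.PosDef := cfc_posDef hB.1 fun x hx =>
    Real.rpow_pos_of_pos (add_pos_of_nonneg_of_pos (spectrum_nonneg hB hx) hε) _
  have hY : Y.PosDef := rpowH_posDef (conj_posDef hA hQ) _
  have hYY : Y * Y = Q * A * Q := rpowH_half_mul_self (conj_posDef hA hQ)
  have hBA : (B * A).IsHermitian := by
    rw [mul_cfc_eq_cfc hB.1]
    exact cfc_predicate _ B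
  have hSY : (Y * S * Y).charpoly = A.charpoly := by
    rw [charpoly_conj_of_mul_self_eq hYY, rpowH_neg_half_conj_self hS, Matrix.one_mul]
  refine ⟨Y, hY, ?_, ?_⟩ <;> rw [retr_mul_inv_eq_retr_conj (rpowH_neg_half_mul_self hS)]
  · rw [retr_rpowH_congr_charpoly (conj_posSemidef hR hY.1).1 hBA
      (charpoly_conj_of_mul_self_eq hYY R)]
    exact retr_le_retr_rpowH_mul_cfc hB hα hε.le
  · rw [retr_rpowH_congr_charpoly (conj_posDef hS hY).1 hA.1 hSY]
    exact retr_rpowH_cfc_add_rpow hB hα hε.le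

end NearOptimizer

section VariationalFormula

/-- The Petz–Rényi divergence `D_α(ρ‖σ)`. The trace is replaced by its real part, which
loses nothing when `ρ` and `σ` are positive semidefinite. -/
def petzRenyiDivergence (α : ℝ) (ρ σ : Matrix ι ι ℂ) : ℝ :=
  (α - 1)⁻¹ * Real.log (retr (ρ.rpowH α * σ.rpowH (1 - α)))

/-- The functional maximised in the variational formula, written in terms of `R = ρ ^ α`,
`S = σ ^ (α - 1)` and `Y = T ^ (α / 2)`. -/
def variationalFunctional (α : ℝ) (R S Y : Matrix ι ι ℂ) : ℝ :=
  α / (α - 1) * Real.log (retr ((Y * R * Y).rpowH α⁻¹)) -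
    Real.log (retr ((Y * S * Y).rpowH (α - 1)⁻¹))

variable {α : ℝ}

lemma petzRenyiDivergence_eq (α : ℝ) (ρ : Matrix ι ι ℂ) {σ : Matrix ι ι ℂ} (hσ : σ.PosDef) :
    petzRenyiDivergence α ρ σ =
      (α - 1)⁻¹ * Real.log (retr (ρ.rpowH α * (σ.rpowH (α - 1))⁻¹)) := by
  rw [petzRenyiDivergence, ← neg_sub α 1, rpowH_neg hσ]

lemma variationalFunctional_le (hα : 1 < α) (hR : R.PosSemidef) (hR0 : R ≠ 0) (hS : S.PosDef)
    (hY : Y.PosDef) :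
    variationalFunctional α R S Y ≤ (α - 1)⁻¹ * Real.log (retr (R * S⁻¹)) := by
  have hα1 : 0 < α - 1 := by linarith
  have hYRY := conj_posSemidef hR hY.1
  have hYSY := conj_posDef hS hY
  have htrR := retr_rpowH_pos hYRY (conj_ne_zero hR0 hY.isUnit) α⁻¹
  have htrS := retr_rpowH_pos hYSY.posSemidef (posDef_ne_zero_of_ne_zero hYSY hR0) (α - 1)⁻¹
  have htr := retr_mul_inv_pos hR hR0 hS
  have hholder := retr_rpowH_inv_le hYRY hYSY hα
  rw [retr_conj_mul_inv_conj hY.isUnit] at hholder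
  have hlog := Real.log_le_log htrR hholder
  rw [Real.log_mul (Real.rpow_pos_of_pos htrS _).ne' (Real.rpow_pos_of_pos htr _).ne',
    Real.log_rpow htrS, Real.log_rpow htr] at hlog
  rw [variationalFunctional, sub_le_iff_le_add']
  calc α / (α - 1) * Real.log (retr ((Y * R * Y).rpowH α⁻¹))
      ≤ α / (α - 1) * ((1 - α⁻¹) * Real.log (retr ((Y * S * Y).rpowH (α - 1)⁻¹)) +
          α⁻¹ * Real.log (retr (R * S⁻¹))) := by gcongr
    _ = Real.log (retr ((Y * S * Y).rpowH (α - 1)⁻¹)) +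
          (α - 1)⁻¹ * Real.log (retr (R * S⁻¹)) := by field_simp

lemma log_retr_rpowH_smul_conj (hR : R.PosSemidef) (hR0 : R ≠ 0) (hY : Y.PosDef) {k : ℝ}
    (hk : 0 < k) (p : ℝ) :
    Real.log (retr ((k • Y * R * (k • Y)).rpowH p)) =
      p * Real.log (k * k) + Real.log (retr ((Y * R * Y).rpowH p)) := by
  have hYRY := conj_posSemidef hR hY.1
  have htr := retr_rpowH_pos hYRY (conj_ne_zero hR0 hY.isUnit) p
  have hkk : 0 < k * k := mul_pos hk hk
  rw [Matrix.mul_smul, Matrix.smul_mul, Matrix.smul_mul, smul_smul, rpowH_smul hYRY hkk.le,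
    retr_smul, Real.log_mul (Real.rpow_pos_of_pos hkk p).ne' htr.ne',
    Real.log_rpow hkk]

lemma variationalFunctional_smul (hα : 1 < α) (hR : R.PosSemidef) (hR0 : R ≠ 0) (hS : S.PosDef)
    (hY : Y.PosDef) {k : ℝ} (hk : 0 < k) :
    variationalFunctional α R S (k • Y) = variationalFunctional α R S Y := by
  have hα1 : 0 < α - 1 := by linarith
  simp only [variationalFunctional]
  rw [log_retr_rpowH_smul_conj hR hR0 hY hk,
    log_retr_rpowH_smul_conj hS.posSemidef (posDef_ne_zero_of_ne_zero hS hR0) hY hk]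
  field_simp
  ring

lemma exists_posDef_le_variationalFunctional (hα : 1 < α) (hR : R.PosSemidef) (hR0 : R ≠ 0)
    (hS : S.PosDef) {ε : ℝ} (hε : 0 < ε) :
    ∃ Y : Matrix ι ι ℂ, Y.PosDef ∧
      α / (α - 1) * Real.log (retr (R * S⁻¹)) -
          Real.log (retr (R * S⁻¹) + Fintype.card ι * ε) ≤
        variationalFunctional α R S Y := by
  have : 0 < α - 1 := by linarith
  have htr := retr_mul_inv_pos hR hR0 hS
  obtain ⟨Y, hY, hRY, hSY⟩ := exists_posDef_retr_bounds hα hε hR hS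
  refine ⟨Y, hY, ?_⟩
  rw [variationalFunctional, hSY]
  gcongr

lemma tendsto_sub_log_add {β : ℝ} (hα : 1 < α) (hβ : β ≠ 0) (n : ℝ) :
    Filter.Tendsto (fun ε => α / (α - 1) * Real.log β - Real.log (β + n * ε))
      (nhdsWithin 0 (Set.Ioi 0)) (nhds ((α - 1)⁻¹ * Real.log β)) := by
  have hα1 : 0 < α - 1 := by linarith
  have hcont : ContinuousAt (fun ε => α / (α - 1) * Real.log β - Real.log (β + n * ε)) 0 :=
    continuousAt_const.sub (ContinuousAt.log (by fun_prop) (by simpa using hβ))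
  have hvalue : α / (α - 1) * Real.log β - Real.log (β + n * 0) = (α - 1)⁻¹ * Real.log β := by
    rw [mul_zero, add_zero]
    field_simp
    ring
  exact hvalue ▸ hcont.tendsto.mono_left nhdsWithin_le_nhds

lemma isLUB_variationalFunctional (hα : 1 < α) (hR : R.PosSemidef) (hR0 : R ≠ 0)
    (hS : S.PosDef) :
    IsLUB (variationalFunctional α R S '' {Y | Y.PosDef})
      ((α - 1)⁻¹ * Real.log (retr (R * S⁻¹))) := by
  refine ⟨?_, fun b hb => ?_⟩
  · rintro _ ⟨Y, hY, rfl⟩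
    exact variationalFunctional_le hα hR hR0 hS hY
  · refine le_of_tendsto (tendsto_sub_log_add hα (retr_mul_inv_pos hR hR0 hS).ne'
      (Fintype.card ι)) (eventually_mem_nhdsWithin.mono fun ε hε => ?_)
    obtain ⟨Y, hY, hle⟩ := exists_posDef_le_variationalFunctional hα hR hR0 hS hε
    exact hle.trans (hb ⟨Y, hY, rfl⟩)

lemma image_variationalFunctional_rpowH (hα : 1 < α) (hR : R.PosSemidef) (hR0 : R ≠ 0)
    (hS : S.PosDef) :
    (fun T : Matrix ι ι ℂ => variationalFunctional α R S (T.rpowH (α / 2))) ''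
        {T : Matrix ι ι ℂ | T.PosDef ∧ (1 - T).PosSemidef} =
      variationalFunctional α R S '' {Y | Y.PosDef} := by
  refine Set.Subset.antisymm ?_ ?_
  · rintro _ ⟨T, hT, rfl⟩
    exact ⟨T.rpowH (α / 2), rpowH_posDef hT.1 _, rfl⟩
  · rintro _ ⟨Y, hY, rfl⟩
    obtain ⟨T, k, hk, hT, hTY⟩ := exists_rpowH_eq_smul hY (show 0 < α / 2 by linarith)
    refine ⟨T, hT, ?_⟩
    simp only [hTY, variationalFunctional_smul hα hR hR0 hS hY hk]

lemma petzRenyiDivergence_nonneg {ρ σ : Matrix ι ι ℂ} (hα : 1 < α) (hρ : ρ.PosSemidef)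
    (hρtr : ρ.trace = 1) (hσ : σ.PosDef) (hσtr : σ.trace = 1) :
    0 ≤ petzRenyiDivergence α ρ σ := by
  have hρ0 : ρ ≠ 0 := by rintro rfl; simp at hρtr
  have hvalue : variationalFunctional α (ρ.rpowH α) (σ.rpowH (α - 1)) 1 = 0 := by
    simp [variationalFunctional, rpowH_rpowH_inv hρ (by linarith : α ≠ 0),
      rpowH_rpowH_inv hσ.posSemidef (sub_pos.mpr hα).ne', retr, hρtr, hσtr]
  rw [petzRenyiDivergence_eq α ρ hσ, ← hvalue]
  exact variationalFunctional_le hα (rpowH_posSemidef hρ α) (rpowH_ne_zero hρ hρ0 α)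
    (rpowH_posDef hσ _) Matrix.PosDef.one

end VariationalFormula

end PetzRenyi

open PetzRenyi in
theorem petz_renyi_variational_general {ι : Type*} [Fintype ι] [DecidableEq ι]
    {ρ σ : Matrix ι ι ℂ} (hρ : ρ.PosSemidef) (hρ0 : ρ ≠ 0) (hσ : σ.PosDef)
    {α : ℝ} (hα : 1 < α) :
    IsLUB
      ((fun T : Matrix ι ι ℂ =>
          variationalFunctional α (ρ.rpowH α) (σ.rpowH (α - 1)) (T.rpowH (α / 2))) ''
        {T : Matrix ι ι ℂ | T.PosDef ∧ (1 - T).PosSemidef})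
      (petzRenyiDivergence α ρ σ) := by
  have hR := rpowH_posSemidef hρ α
  have hR0 := rpowH_ne_zero hρ hρ0 α
  have hS := rpowH_posDef hσ (α - 1)
  rw [image_variationalFunctional_rpowH hα hR hR0 hS, petzRenyiDivergence_eq α ρ hσ]
  exact isLUB_variationalFunctional hα hR hR0 hS

/-- variational expression for the Petz–Rényi divergence, `α > 1`.
For a density operator `ρ`, a positive definite density operator `σ`, and `α > 1`:
`D_α(ρ‖σ) = (α-1)⁻¹ log Tr[ρ^α σ^{1-α}]
  = sup_{0 < T ≤ 𝟙} { (α/(α-1)) log Tr[(T^{α/2} ρ^α T^{α/2})^{1/α}]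
      - log Tr[(T^{α/2} σ^{α-1} T^{α/2})^{1/(α-1)}] }`. -/
theorem petz_renyi_variational
    {ι : Type*} [Fintype ι] [DecidableEq ι]
    (ρ σ : Matrix ι ι ℂ)
    (hρ : ρ.PosSemidef) (hρtr : ρ.trace = 1)
    (hσ : σ.PosDef) (hσtr : σ.trace = 1)
    (α : ℝ) (hα : 1 < α) :
    (α - 1)⁻¹ * Real.log (retr (Matrix.rpowH ρ α * Matrix.rpowH σ (1 - α))) =
      ⨆ (T : Matrix ι ι ℂ) (_ : T.PosDef ∧ (1 - T).PosSemidef),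
        (α / (α - 1) * Real.log (retr (Matrix.rpowH
            (Matrix.rpowH T (α / 2) * Matrix.rpowH ρ α * Matrix.rpowH T (α / 2)) α⁻¹))
          - Real.log (retr (Matrix.rpowH
            (Matrix.rpowH T (α / 2) * Matrix.rpowH σ (α - 1) * Matrix.rpowH T (α / 2))
            (α - 1)⁻¹))) := by
  have hρ0 : ρ ≠ 0 := by rintro rfl; simp at hρtr
  exact PetzRenyi.eq_biSup_of_isLUB_image (petz_renyi_variational_general hρ hρ0 hσ hα)
    (PetzRenyi.petzRenyiDivergence_nonneg hα hρ hρtr hσ hσtr)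

end
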